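/- arXiv:2509.05725 — 3 statements merged into one kernel-verified Lean document; each statement's English description precedes it below -/
import Mathlib

section
/- Let A be an abelian category with a C₂-action (T, u). If P is a projective object of A, then the induced equivariant object Ind(P) = (P ⊕ T(P), α_P) is a projective object of the category A^{(T,u)} of C₂-equivariant objects. -/
/-!
`Ind` is left adjoint to the forgetful functor `U`, so it preserves projectives as soon as `U`
preserves epimorphisms. Since `T` is an involution up to `u`, the functor `Ind` is also right
adjoint to `U`: thus `U` is a left adjoint and preserves epimorphisms.
-/

open CategoryTheory CategoryTheory.Limits

universe v u

/-- A `C₂`-action on a category `C`: an autoequivalence `T` together with a natural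
isomorphism `u : Id_C ≅ T ⋙ T` satisfying `Tu = uT`. -/
structure C2Action (C : Type u) [Category.{v} C] where
  T : C ⥤ C
  isEquiv : T.IsEquivalence
  u : Functor.id C ≅ T ⋙ T
  compat : ∀ X : C, T.map (u.hom.app X) = u.hom.app (T.obj X)

variable {C : Type u} [Category.{v} C]

/-- A `C₂`-equivariant object: `(X, α)` with `α : X ≅ T X` such that `T(α) ∘ α = u_X`. -/
structure EquivObj (A : C2Action C) where
  X : C
  α : X ≅ A.T.obj X
  cond : α.hom ≫ A.T.map α.hom = A.u.hom.app X

/-- A morphism of `C₂`-equivariant objects: `f : X ⟶ Y` with `β ∘ f = T(f) ∘ α`. -/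
@[ext]
structure EquivHom {A : C2Action C} (M N : EquivObj A) where
  val : M.X ⟶ N.X
  comm : val ≫ N.α.hom = M.α.hom ≫ A.T.map val

/-- The category of `C₂`-equivariant objects. -/
instance (A : C2Action C) : Category (EquivObj A) where
  Hom := EquivHom
  id M := ⟨𝟙 M.X, by simp⟩
  comp {M N P} f g := ⟨f.val ≫ g.val, by
    rw [Category.assoc, g.comm, ← Category.assoc, f.comm, Category.assoc, ← Functor.map_comp]⟩
  id_comp f := EquivHom.ext (Category.id_comp _)
  comp_id f := EquivHom.ext (Category.comp_id _)
  assoc f g h := EquivHom.ext (Category.assoc _ _ _)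

@[simp] lemma EquivObj.comp_val {A : C2Action C} {M N P : EquivObj A} (f : M ⟶ N) (g : N ⟶ P) :
    (f ≫ g).val = f.val ≫ g.val := rfl

@[simp] lemma EquivObj.id_val {A : C2Action C} (M : EquivObj A) :
    EquivHom.val (𝟙 M) = 𝟙 M.X := rfl

/-- The forgetful functor `U : C^{(T,u)} ⟶ C`, sending `(X, α)` to `X`. -/
def C2Action.forget (A : C2Action C) : EquivObj A ⥤ C where
  obj M := M.X
  map f := f.val
  map_id _ := rfl
  map_comp _ _ := rfl

section Additive

variable [Preadditive C] [HasBinaryBiproducts C]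

/-- The equivariant object `Ind(X) = (X ⊕ T X, ((0, 1), (u_X, 0)))`, where the isomorphism
`X ⊕ T X ≅ T (X ⊕ T X)` is written with respect to the canonical identification
`T (X ⊕ T X) ≅ T X ⊕ T² X`. -/
noncomputable def C2Action.indObj (A : C2Action C) [A.T.Additive] (X : C) : EquivObj A where
  X := X ⊞ A.T.obj X
  α :=
    { hom := biprod.desc (A.u.hom.app X ≫ A.T.map biprod.inr) (A.T.map biprod.inl)
      inv := biprod.lift (A.T.map biprod.snd ≫ A.u.inv.app X) (A.T.map biprod.fst)
      hom_inv_id := by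
        apply biprod.hom_ext' <;> apply biprod.hom_ext <;>
          simp [← Functor.map_comp, ← Functor.map_comp_assoc]
      inv_hom_id := by
        rw [biprod.lift_desc, Category.assoc, ← Category.assoc (A.u.inv.app X),
          Iso.inv_hom_id_app, Category.id_comp, ← Functor.map_comp, ← Functor.map_comp,
          ← Functor.map_add]
        have tot : (biprod.snd ≫ biprod.inr : X ⊞ A.T.obj X ⟶ _) + biprod.fst ≫ biprod.inl
            = 𝟙 _ := by
          rw [add_comm]; exact biprod.total
        rw [tot]
        exact A.T.map_id _ }
  cond := by
    apply biprod.hom_ext'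
    · rw [← Category.assoc, biprod.inl_desc, Category.assoc, ← Functor.map_comp, biprod.inr_desc]
      have nat := A.u.hom.naturality (biprod.inl : X ⟶ X ⊞ A.T.obj X)
      simp only [Functor.id_map, Functor.comp_map] at nat
      rw [← nat]
    · rw [← Category.assoc, biprod.inr_desc, ← Functor.map_comp, biprod.inl_desc]
      have nat := A.u.hom.naturality (biprod.inr : A.T.obj X ⟶ X ⊞ A.T.obj X)
      simp only [Functor.id_map, Functor.comp_map] at nat
      rw [Functor.map_comp, A.compat X, ← nat]

/-- The induction functor `Ind : C ⟶ C^{(T,u)}`, with `Ind(X) = (X ⊕ T X, ((0,1),(u_X,0)))`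
and `Ind(f) = f ⊕ T(f)`. -/
noncomputable def C2Action.Ind (A : C2Action C) [A.T.Additive] : C ⥤ EquivObj A where
  obj X := A.indObj X
  map {X Y} f :=
    { val := biprod.map f (A.T.map f)
      comm := by
        have nat := A.u.hom.naturality f
        simp only [Functor.id_map, Functor.comp_map] at nat
        apply biprod.hom_ext'
        · simp only [C2Action.indObj, biprod.inl_map_assoc, biprod.inl_desc,
            biprod.inl_desc_assoc, Category.assoc, ← Functor.map_comp, biprod.inr_map]
          rw [Functor.map_comp, reassoc_of% nat]
        · simp [C2Action.indObj, ← Functor.map_comp, ← Functor.map_comp_assoc] }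
  map_id X := by
    apply EquivHom.ext
    apply biprod.hom_ext' <;> simp [C2Action.indObj]
  map_comp f g := by
    apply EquivHom.ext
    apply biprod.hom_ext' <;> simp [C2Action.indObj]

/-- The morphism `Ind(X) ⟶ (Y, β)` with components `f : X ⟶ Y` and
`β⁻¹ ∘ T(f) : T(X) ⟶ Y` associated to a morphism `f : X ⟶ Y`. -/
noncomputable def C2Action.descHom (A : C2Action C) [A.T.Additive] {X : C} {N : EquivObj A}
    (f : X ⟶ N.X) : A.indObj X ⟶ N where
  val := biprod.desc f (A.T.map f ≫ N.α.inv)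
  comm := by
    have nat := A.u.hom.naturality f
    simp only [Functor.id_map, Functor.comp_map] at nat
    have hβ : N.α.hom = A.u.hom.app N.X ≫ A.T.map N.α.inv := by
      rw [← N.cond, Category.assoc, ← Functor.map_comp, N.α.hom_inv_id,
        CategoryTheory.Functor.map_id, Category.comp_id]
    show biprod.desc f (A.T.map f ≫ N.α.inv) ≫ N.α.hom
        = biprod.desc (A.u.hom.app X ≫ A.T.map biprod.inr) (A.T.map biprod.inl) ≫
          A.T.map (biprod.desc f (A.T.map f ≫ N.α.inv))
    apply biprod.hom_ext'
    · rw [← Category.assoc, biprod.inl_desc, ← Category.assoc, biprod.inl_desc, Category.assoc,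
        ← Functor.map_comp, biprod.inr_desc, Functor.map_comp, ← Category.assoc, ← nat,
        Category.assoc, ← hβ]
    · rw [← Category.assoc, biprod.inr_desc, ← Category.assoc, biprod.inr_desc,
        ← Functor.map_comp, biprod.inl_desc, Category.assoc, N.α.inv_hom_id, Category.comp_id]

end Additive

namespace EquivObj

variable {A : C2Action C}

lemma α_inv_comp_val {M N : EquivObj A} (f : M ⟶ N) :
    M.α.inv ≫ f.val = A.T.map f.val ≫ N.α.inv := by
  rw [Iso.inv_comp_eq, ← Category.assoc, Iso.eq_comp_inv]
  exact f.comm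

lemma α_inv_eq_map_α_hom_comp_u_inv (M : EquivObj A) :
    M.α.inv = A.T.map M.α.hom ≫ A.u.inv.app M.X := by
  refine ((Iso.hom_comp_eq_id _).1 ?_).symm
  rw [reassoc_of% M.cond, Iso.hom_inv_id_app]
  rfl

end EquivObj

namespace C2Action

variable [Preadditive C] [HasBinaryBiproducts C] (A : C2Action C) [A.T.Additive]

/-- The inclusion `X ⟶ X ⊕ T X` into the underlying object of `Ind(X)`, that is, the unit of the
adjunction `Ind ⊣ U`. -/
noncomputable def indInl (X : C) : X ⟶ (A.indObj X).X :=
  biprod.inl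

/-- The projection `X ⊕ T X ⟶ X` from the underlying object of `Ind(X)`, that is, the counit of
the adjunction `U ⊣ Ind`. -/
noncomputable def indFst (X : C) : (A.indObj X).X ⟶ X :=
  biprod.fst

variable {A} {X Z : C} {M N : EquivObj A}

lemma inr_eq_map_indInl_comp_α_inv (X : C) :
    biprod.inr = A.T.map (A.indInl X) ≫ (A.indObj X).α.inv :=
  (Iso.eq_comp_inv _).2 (biprod.inr_desc _ _)

lemma snd_eq_α_hom_comp_map_indFst (X : C) :
    biprod.snd = (A.indObj X).α.hom ≫ A.T.map (A.indFst X) :=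
  (Iso.inv_comp_eq _).1 (biprod.lift_snd _ _)

lemma indObj_X_hom_ext {f g : (A.indObj X).X ⟶ Z} (hl : A.indInl X ≫ f = A.indInl X ≫ g)
    (hr : (A.T.map (A.indInl X) ≫ (A.indObj X).α.inv) ≫ f =
      (A.T.map (A.indInl X) ≫ (A.indObj X).α.inv) ≫ g) : f = g :=
  biprod.hom_ext' _ _ hl (by rwa [inr_eq_map_indInl_comp_α_inv])

lemma hom_indObj_X_ext {f g : Z ⟶ (A.indObj X).X} (hl : f ≫ A.indFst X = g ≫ A.indFst X)
    (hr : f ≫ (A.indObj X).α.hom ≫ A.T.map (A.indFst X) =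
      g ≫ (A.indObj X).α.hom ≫ A.T.map (A.indFst X)) : f = g :=
  biprod.hom_ext _ _ hl (by rwa [snd_eq_α_hom_comp_map_indFst])

lemma indObj_hom_ext {f g : A.indObj X ⟶ N}
    (h : A.indInl X ≫ f.val = A.indInl X ≫ g.val) : f = g :=
  EquivHom.ext (indObj_X_hom_ext h (by
    simp only [Category.assoc, EquivObj.α_inv_comp_val, ← Functor.map_comp_assoc, h]))

lemma hom_indObj_ext {f g : M ⟶ A.indObj Z}
    (h : f.val ≫ A.indFst Z = g.val ≫ A.indFst Z) : f = g :=
  EquivHom.ext (hom_indObj_X_ext h (by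
    rw [reassoc_of% f.comm, reassoc_of% g.comm, ← Functor.map_comp, h, Functor.map_comp]))

lemma indInl_comp_descHom_val (f : X ⟶ N.X) : A.indInl X ≫ (A.descHom f).val = f :=
  biprod.inl_desc _ _

lemma descHom_comp (f : X ⟶ Z) (g : Z ⟶ N.X) :
    A.descHom (f ≫ g) = A.Ind.map f ≫ A.descHom g := by
  have inl_comp_map : A.indInl X ≫ (A.Ind.map f).val = f ≫ A.indInl Z := biprod.inl_map _ _
  apply indObj_hom_ext
  calc A.indInl X ≫ (A.descHom (f ≫ g)).val
      = f ≫ A.indInl Z ≫ (A.descHom g).val := by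
        rw [indInl_comp_descHom_val, indInl_comp_descHom_val]
    _ = (f ≫ A.indInl Z) ≫ (A.descHom g).val := (Category.assoc _ _ _).symm
    _ = (A.indInl X ≫ (A.Ind.map f).val) ≫ (A.descHom g).val := (inl_comp_map =≫ _).symm
    _ = A.indInl X ≫ (A.Ind.map f ≫ A.descHom g).val := Category.assoc _ _ _

-- Compatibility in the component `T Z` suffices: the component `Z` follows by applying `T` and
-- cancelling `u`.
lemma comp_α_hom_eq_of_comp_α_hom_comp_map_indFst {k : M.X ⟶ (A.indObj Z).X}
    (h : k ≫ (A.indObj Z).α.hom ≫ A.T.map (A.indFst Z) = M.α.hom ≫ A.T.map (k ≫ A.indFst Z)) :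
    k ≫ (A.indObj Z).α.hom = M.α.hom ≫ A.T.map k := by
  have u_inv_comp_indFst :
      A.T.map (A.indObj Z).α.hom ≫ A.u.inv.app (A.indObj Z).X ≫ A.indFst Z =
        A.T.map ((A.indObj Z).α.hom ≫ A.T.map (A.indFst Z)) ≫ A.u.inv.app Z := by
    have nat := A.u.inv.naturality (A.indFst Z)
    simp only [Functor.id_map, Functor.comp_map] at nat
    rw [Functor.map_comp, Category.assoc, nat]
  rw [← Iso.eq_comp_inv]
  apply hom_indObj_X_ext
  · symm
    calc ((M.α.hom ≫ A.T.map k) ≫ (A.indObj Z).α.inv) ≫ A.indFst Z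
        = M.α.hom ≫ A.T.map (k ≫ (A.indObj Z).α.hom ≫ A.T.map (A.indFst Z)) ≫
            A.u.inv.app Z := by
          simp only [Category.assoc, EquivObj.α_inv_eq_map_α_hom_comp_u_inv,
            u_inv_comp_indFst, Functor.map_comp]
      _ = A.u.hom.app M.X ≫ A.T.map (A.T.map (k ≫ A.indFst Z)) ≫ A.u.inv.app Z := by
          rw [h, Functor.map_comp, Category.assoc, reassoc_of% M.cond]
      _ = k ≫ A.indFst Z := NatIso.naturality_2 A.u _
  · rw [h, Category.assoc, Category.assoc, Iso.inv_hom_id_assoc, Functor.map_comp]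

/-- The morphism `(Y, β) ⟶ Ind(Z)` with components `f : Y ⟶ Z` and `T(f) ∘ β : Y ⟶ T(Z)`
associated to a morphism `f : Y ⟶ Z`, dual to `C2Action.descHom`. -/
noncomputable def liftHom (f : M.X ⟶ Z) : M ⟶ A.indObj Z where
  val := biprod.lift f (M.α.hom ≫ A.T.map f)
  comm := by
    apply comp_α_hom_eq_of_comp_α_hom_comp_map_indFst
    rw [← snd_eq_α_hom_comp_map_indFst]
    exact (biprod.lift_snd _ _).trans
      (congrArg (fun k ↦ M.α.hom ≫ A.T.map k) (biprod.lift_fst _ _).symm)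

lemma liftHom_val_comp_indFst (f : M.X ⟶ Z) : (liftHom f).val ≫ A.indFst Z = f :=
  biprod.lift_fst _ _

lemma liftHom_comp (f : M.X ⟶ X) (g : X ⟶ Z) :
    liftHom (f ≫ g) = liftHom f ≫ A.Ind.map g := by
  have map_comp_fst : (A.Ind.map g).val ≫ A.indFst Z = A.indFst X ≫ g := biprod.map_fst _ _
  apply hom_indObj_ext
  calc (liftHom (f ≫ g)).val ≫ A.indFst Z
      = ((liftHom f).val ≫ A.indFst X) ≫ g := by
        rw [liftHom_val_comp_indFst, liftHom_val_comp_indFst]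
    _ = (liftHom f).val ≫ A.indFst X ≫ g := Category.assoc _ _ _
    _ = (liftHom f).val ≫ (A.Ind.map g).val ≫ A.indFst Z := (_ ≫= map_comp_fst).symm
    _ = (liftHom f ≫ A.Ind.map g).val ≫ A.indFst Z := (Category.assoc _ _ _).symm

variable (A)

/-- Induction is left adjoint to the forgetful functor: a morphism `Ind(X) ⟶ (Y, β)` corresponds
to its restriction to the summand `X`. -/
noncomputable def indForgetAdjunction : A.Ind ⊣ A.forget :=
  Adjunction.mkOfHomEquiv
    { homEquiv X _ :=
        { toFun g := A.indInl X ≫ g.val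
          invFun f := A.descHom f
          left_inv _ := indObj_hom_ext (indInl_comp_descHom_val _)
          right_inv := indInl_comp_descHom_val }
      homEquiv_naturality_left_symm := descHom_comp
      homEquiv_naturality_right _ _ := (Category.assoc _ _ _).symm }

/-- Induction is right adjoint to the forgetful functor: a morphism `(Y, β) ⟶ Ind(Z)` corresponds
to its component `Y ⟶ Z`. -/
noncomputable def forgetIndAdjunction : A.forget ⊣ A.Ind :=
  Adjunction.mkOfHomEquiv
    { homEquiv _ Z :=
        { toFun f := liftHom f
          invFun g := g.val ≫ A.indFst Z
          left_inv := liftHom_val_comp_indFst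
          right_inv _ := hom_indObj_ext (liftHom_val_comp_indFst _) }
      homEquiv_naturality_left_symm _ _ := Category.assoc _ _ _
      homEquiv_naturality_right := liftHom_comp }

instance : A.forget.PreservesEpimorphisms :=
  Functor.preservesEpimorphisms_of_adjunction A.forgetIndAdjunction

instance : A.Ind.PreservesProjectiveObjects :=
  Functor.preservesProjectiveObjects_of_adjunction_of_preservesEpimorphisms A.indForgetAdjunction

theorem projective_indObj_general (P : C) [Projective P] : Projective (A.indObj P) :=
  A.Ind.projective_obj P

end C2Action

/-- Let `A` be an abelian category with a `C₂`-action `(T, u)`. If `P` is a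
projective object of `A`, then the induced equivariant object `Ind(P) = (P ⊕ T(P), α_P)` is
a projective object of the category of `C₂`-equivariant objects. -/
theorem C2Action.projective_indObj
    {C : Type u} [Category.{v} C] [Abelian C]
    (A : C2Action C) [A.T.Additive] (P : C) (hP : Projective P) :
    Projective (A.indObj P) :=
  A.projective_indObj_general P
end

section
/- Let R be any ring (associative, with unit). Then the stable category R-Mod-underline, the quotient of the category of all left R-modules by the ideal of morphisms factoring through a projective module, is idempotent-split: every idempotent endomorphism in R-Mod-underline splits. -/
/-!
*Swindle.* Let `e` be an idempotent endomorphism of `X` in a preadditive category with countable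
coproducts. If `e` splits, the copower `A = ∐_ℕ X` is the sum of the copowers of the image of `e`
and of its complement; let `φ` be the backward shift on the first and the identity on the second.
The formula for `φ` makes sense even if `e` does not split, and `φ` is always a split
epimorphism. A morphism into `A` is killed by `φ` exactly when it is concentrated in degree `0` and
fixed by `e`, so a kernel of `φ` is an equalizer of `𝟙` and `e`, and hence splits `e`. It is
therefore enough that split epimorphisms have kernels.

*Ideal quotients.* Suppose `f : X ⟶ Y` becomes a split epimorphism modulo the morphisms that factor
through objects satisfying `P`, with section `g`. The error `g ≫ f - 𝟙 = a ≫ b` factors through some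
`Z` satisfying `P`, so that `(f, -b) : X ⊞ Z ⟶ Y` is split by `(g, a)` before passing to the
quotient. If idempotents split in the original category, this morphism has a kernel which is
preserved by the additive quotient functor; and in the quotient `X ⊞ Z` is isomorphic to `X`.
Coproducts descend to the quotient when `P` is closed under them, as projectivity is.
-/

open CategoryTheory

universe u

/-- The stable relation on the category of left `R`-modules: two homomorphisms are related
iff their difference factors through a projective module. The quotient of `R-Mod` by this
relation is the stable category of `R-Mod`. -/
def stableRel (R : Type u) [Ring R] : HomRel (ModuleCat.{u} R) :=
  fun {M N} f g =>
    ∃ (P : ModuleCat.{u} R), Projective P ∧ ∃ (a : M ⟶ P) (b : P ⟶ N), f - g = a ≫ b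

/-- The stable category of the category of all left `R`-modules: it has the same objects as
`R-Mod`, and its Hom-groups are the quotients of those of `R-Mod` by the subgroup of
homomorphisms factoring through a projective module. -/
abbrev StableModuleCat (R : Type u) [Ring R] := CategoryTheory.Quotient (stableRel R)

open Limits

/-- The coproduct of countably many copies of `X`. -/
noncomputable abbrev natCopower {C : Type*} [Category* C] [HasCoproductsOfShape ℕ C] (X : C) : C :=
  ∐ fun _ : ℕ => X

namespace natCopower

variable {C : Type*} [Category* C] [HasCoproductsOfShape ℕ C] {X : C}

/-- The endomorphism of the copower acting as `e` on every summand. -/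
noncomputable abbrev map (e : X ⟶ X) : natCopower X ⟶ natCopower X :=
  Limits.Sigma.map fun _ => e

lemma map_comp_map {e : X ⟶ X} (he : e ≫ e = e) : map e ≫ map e = map e := by
  rw [Limits.Sigma.map_comp_map, funext fun _ => he]

/-- The forward shift `(x₀, x₁, …) ↦ (0, x₀, x₁, …)`. -/
noncomputable def shift (X : C) : natCopower X ⟶ natCopower X :=
  Sigma.desc fun n => Sigma.ι (fun _ : ℕ => X) (n + 1)

/-- The inclusion of the summand of index `0`. -/
noncomputable abbrev ι₀ (X : C) : X ⟶ natCopower X :=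
  Sigma.ι (fun _ : ℕ => X) 0

variable [Preadditive C]

/-- The projection onto the summand of index `0`. -/
noncomputable abbrev π₀ (X : C) : natCopower X ⟶ X :=
  Sigma.π (fun _ : ℕ => X) 0

/-- The backward shift `(x₀, x₁, x₂, …) ↦ (x₁, x₂, …)`. -/
noncomputable def backshift (X : C) : natCopower X ⟶ natCopower X :=
  Sigma.desc fun
    | 0 => 0
    | n + 1 => Sigma.ι (fun _ : ℕ => X) n

lemma shift_comp_backshift : shift X ≫ backshift X = 𝟙 _ :=
  Sigma.hom_ext _ _ fun n => by simp [shift, backshift]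

lemma backshift_comp_shift_add : backshift X ≫ shift X + π₀ X ≫ ι₀ X = 𝟙 _ := by
  refine Sigma.hom_ext _ _ fun n => ?_
  cases n with
  | zero => simp [backshift]
  | succ n => simp [backshift, shift, Sigma.ι_π_of_ne_assoc]

lemma map_comp_backshift (e : X ⟶ X) : map e ≫ backshift X = backshift X ≫ map e := by
  refine Sigma.hom_ext _ _ fun n => ?_
  cases n <;> simp [backshift]

/-- The map which, if the idempotent `e` splits, is the backward shift on the copower of the
image of `e` and the identity on the copower of its complement. -/
noncomputable def swindle (e : X ⟶ X) : natCopower X ⟶ natCopower X :=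
  backshift X ≫ map e + (𝟙 _ - map e)

lemma isSplitEpi_swindle {e : X ⟶ X} (he : e ≫ e = e) : IsSplitEpi (swindle e) := by
  refine IsSplitEpi.mk' ⟨shift X ≫ map e + (𝟙 _ - map e), ?_⟩
  simp only [swindle, Preadditive.add_comp, Preadditive.comp_add, Preadditive.sub_comp,
    Preadditive.comp_sub, Category.assoc, Category.comp_id, Category.id_comp, map_comp_map he,
    reassoc_of% (map_comp_backshift e), reassoc_of% (shift_comp_backshift (X := X))]
  abel

lemma comp_swindle_eq_zero_iff {e : X ⟶ X} (he : e ≫ e = e) {Z : C} (k : Z ⟶ natCopower X) :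
    k ≫ swindle e = 0 ↔ k ≫ map e = k ∧ k ≫ backshift X = 0 := by
  have comp_swindle : k ≫ swindle e = (k ≫ backshift X) ≫ map e + (k - k ≫ map e) := by
    simp [swindle]
  rw [comp_swindle]
  constructor
  · intro hk
    have backshift_map : (k ≫ backshift X) ≫ map e = 0 := by
      simpa [map_comp_map he] using hk =≫ map e
    have fixed : k ≫ map e = k := by
      rwa [backshift_map, zero_add, sub_eq_zero, eq_comm] at hk
    refine ⟨fixed, ?_⟩
    rw [← fixed, Category.assoc, map_comp_backshift, ← Category.assoc, backshift_map]
  · rintro ⟨fixed, backshift_eq_zero⟩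
    simp [fixed, backshift_eq_zero]

lemma comp_π₀_ι₀_of_comp_backshift_eq_zero {Z : C} {k : Z ⟶ natCopower X}
    (hk : k ≫ backshift X = 0) : (k ≫ π₀ X) ≫ ι₀ X = k := by
  simpa [reassoc_of% hk] using k ≫= backshift_comp_shift_add (X := X)

lemma hasEqualizer_id_of_hasKernel_swindle {e : X ⟶ X} (he : e ≫ e = e) [HasKernel (swindle e)] :
    HasEqualizer (𝟙 X) e := by
  obtain ⟨ι_fixed, ι_backshift⟩ :=
    (comp_swindle_eq_zero_iff he (kernel.ι (swindle e))).1 (kernel.condition _)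
  have ι_π₀_ι₀ := comp_π₀_ι₀_of_comp_backshift_eq_zero ι_backshift
  have ι_π₀_fixed : (kernel.ι (swindle e) ≫ π₀ X) ≫ e = kernel.ι (swindle e) ≫ π₀ X := by
    have : (kernel.ι (swindle e) ≫ π₀ X) ≫ e ≫ ι₀ X = kernel.ι (swindle e) := by
      rw [← Limits.Sigma.ι_map (fun _ => e) 0, ← Category.assoc, ι_π₀_ι₀, ι_fixed]
    simpa using this =≫ π₀ X
  have comp_ι₀_swindle {Z : C} {k : Z ⟶ X} (hk : k ≫ e = k) : (k ≫ ι₀ X) ≫ swindle e = 0 := by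
    rw [comp_swindle_eq_zero_iff he]
    simp [backshift, reassoc_of% hk]
  have fork_fixed (s : Fork (𝟙 X) e) : s.ι ≫ e = s.ι := by simpa using s.condition.symm
  exact ⟨⟨Fork.ofι (kernel.ι (swindle e) ≫ π₀ X) (by rw [ι_π₀_fixed, Category.comp_id]),
    Fork.IsLimit.mk _ (fun s => kernel.lift _ (s.ι ≫ ι₀ X) (comp_ι₀_swindle (fork_fixed s)))
      (fun s => by simp)
      (fun s m hm => by
        rw [← cancel_mono (kernel.ι (swindle e)), kernel.lift_ι, ← hm, Fork.ι_ofι,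
          Category.assoc, ι_π₀_ι₀])⟩⟩

end natCopower

theorem isIdempotentComplete_of_hasKernel_of_isSplitEpi {C : Type*} [Category* C] [Preadditive C]
    [HasCoproductsOfShape ℕ C] (h : ∀ ⦃X Y : C⦄ (f : X ⟶ Y) [IsSplitEpi f], HasKernel f) :
    IsIdempotentComplete C := by
  rw [Idempotents.isIdempotentComplete_iff_hasEqualizer_of_id_and_idempotent]
  intro X e he
  have := natCopower.isSplitEpi_swindle he
  have := h (natCopower.swindle e)
  exact natCopower.hasEqualizer_id_of_hasKernel_swindle he

lemma exists_splitting_of_isSplitEpi {C : Type*} [Category* C] [Preadditive C]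
    [IsIdempotentComplete C] {X Y : C} (f : X ⟶ Y) [IsSplitEpi f] :
    ∃ (K : C) (i : K ⟶ X) (w : i ≫ f = 0), Nonempty (ShortComplex.mk i f w).Splitting := by
  obtain ⟨K, i, r, hir, hri⟩ := IsIdempotentComplete.idempotents_split X (𝟙 X - f ≫ section_ f)
    (Idempotents.idem_of_id_sub_idem _ (by simp))
  have w : i ≫ f = 0 := by
    calc i ≫ f = i ≫ (r ≫ i) ≫ f := by simp [reassoc_of% hir]
      _ = 0 := by simp [hri]
  exact ⟨K, i, w, ⟨{ r := r, s := section_ f, f_r := hir, id := by simp [hri] }⟩⟩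

/-- Two morphisms are related when their difference factors through an object satisfying `P`.
For `P` closed under binary coproducts, this is congruence modulo the ideal of morphisms that
factor through such an object. -/
def factorsThroughRel {C : Type*} [Category* C] [Preadditive C] (P : ObjectProperty C) :
    HomRel C :=
  fun {X Y} f g => ∃ Z, P Z ∧ ∃ (a : X ⟶ Z) (b : Z ⟶ Y), f - g = a ≫ b

/-- The quotient of a preadditive category by the ideal of morphisms that factor through an object
satisfying `P`. -/
abbrev IdealQuotient {C : Type*} [Category* C] [Preadditive C] (P : ObjectProperty C) :=
  Quotient (factorsThroughRel P)

namespace factorsThroughRel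

variable {C : Type*} [Category* C] [Preadditive C] [HasBinaryBiproducts C]
  (P : ObjectProperty C) [P.IsClosedUnderColimitsOfShape (Discrete WalkingPair)]

lemma add ⦃X Y : C⦄ (f₁ f₂ g₁ g₂ : X ⟶ Y) (hf : factorsThroughRel P f₁ f₂)
    (hg : factorsThroughRel P g₁ g₂) : factorsThroughRel P (f₁ + g₁) (f₂ + g₂) := by
  obtain ⟨Z, hZ, a, b, hab⟩ := hf
  obtain ⟨W, hW, c, d, hcd⟩ := hg
  have hZW : P (Z ⊞ W) :=
    P.prop_of_isColimit (BinaryBiproduct.isColimit Z W) (by rintro ⟨_ | _⟩ <;> assumption)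
  refine ⟨Z ⊞ W, hZW, biprod.lift a c, biprod.desc b d, ?_⟩
  rw [biprod.lift_desc, ← hab, ← hcd, add_sub_add_comm]

instance [P.Nonempty] : Congruence (factorsThroughRel P) where
  equivalence :=
    { refl := fun f => by
        obtain ⟨Z, hZ⟩ := P.exists_prop_of_nonempty
        exact ⟨Z, hZ, 0, 0, by simp⟩
      symm := by
        rintro f g ⟨Z, hZ, a, b, h⟩
        exact ⟨Z, hZ, -a, b, by rw [Preadditive.neg_comp, ← h, neg_sub]⟩
      trans := fun {f g k} hfg hgk => by
        obtain ⟨Z, hZ, a, b, h⟩ := add P f g g k hfg hgk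
        exact ⟨Z, hZ, a, b, by rw [← h, add_comm g k, add_sub_add_right_eq_sub]⟩ }
  comp_left := by
    rintro X Y Z f g g' ⟨W, hW, a, b, h⟩
    exact ⟨W, hW, f ≫ a, b, by rw [← Preadditive.comp_sub, h, Category.assoc]⟩
  comp_right := by
    rintro X Y Z f f' g ⟨W, hW, a, b, h⟩
    exact ⟨W, hW, a, b ≫ g, by rw [← Preadditive.sub_comp, h, Category.assoc]⟩

end factorsThroughRel

namespace IdealQuotient

variable {C : Type*} [Category* C] [Preadditive C] [HasBinaryBiproducts C]
  (P : ObjectProperty C) [P.Nonempty] [P.IsClosedUnderColimitsOfShape (Discrete WalkingPair)]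

instance : Preadditive (IdealQuotient P) :=
  Quotient.preadditive _ (factorsThroughRel.add P)

/-- The projection of `C` onto its ideal quotient. -/
abbrev functor : C ⥤ IdealQuotient P := Quotient.functor _

instance : (functor P).Additive := Quotient.functor_additive _ (factorsThroughRel.add P)

variable {P}

lemma functor_map_eq_zero_iff {X Y : C} (f : X ⟶ Y) :
    (functor P).map f = 0 ↔ ∃ Z, P Z ∧ ∃ (a : X ⟶ Z) (b : Z ⟶ Y), f = a ≫ b := by
  rw [← (functor P).map_zero, Quotient.functor_map_eq_iff]
  simp only [factorsThroughRel, sub_zero]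

lemma isIso_functor_map_biprod_inl (X : C) {Z : C} (hZ : P Z) :
    IsIso ((functor P).map (biprod.inl : X ⟶ X ⊞ Z)) := by
  have snd_inr : (functor P).map ((biprod.snd : X ⊞ Z ⟶ Z) ≫ (biprod.inr : Z ⟶ X ⊞ Z)) = 0 :=
    (functor_map_eq_zero_iff _).2 ⟨Z, hZ, _, _, rfl⟩
  refine ⟨(functor P).map biprod.fst, ?_, ?_⟩
  · rw [← Functor.map_comp, biprod.inl_fst, CategoryTheory.Functor.map_id]
  · rw [← Functor.map_comp, ← (functor P).map_id, ← biprod.total, Functor.map_add, snd_inr,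
      add_zero]

lemma exists_isSplitEpi_biprod_desc {X Y : C} (f : X ⟶ Y) [IsSplitEpi ((functor P).map f)] :
    ∃ Z, P Z ∧ ∃ z : Z ⟶ Y, IsSplitEpi (biprod.desc f z) := by
  obtain ⟨g, hg⟩ := (functor P).map_surjective (section_ ((functor P).map f))
  have : (functor P).map (g ≫ f - 𝟙 Y) = 0 := by
    rw [Functor.map_sub, Functor.map_comp, hg, IsSplitEpi.id, CategoryTheory.Functor.map_id,
      sub_self]
  obtain ⟨Z, hZ, a, b, hab⟩ := (functor_map_eq_zero_iff _).1 this
  refine ⟨Z, hZ, -b, IsSplitEpi.mk' ⟨biprod.lift g a, ?_⟩⟩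
  rw [biprod.lift_desc, Preadditive.comp_neg, ← hab]
  abel

theorem hasKernel_of_isSplitEpi [HasZeroObject C] [IsIdempotentComplete C]
    ⦃X Y : IdealQuotient P⦄ (f : X ⟶ Y) [IsSplitEpi f] : HasKernel f := by
  obtain ⟨X, rfl⟩ : ∃ A, (functor P).obj A = X := ⟨X.as, rfl⟩
  obtain ⟨Y, rfl⟩ : ∃ B, (functor P).obj B = Y := ⟨Y.as, rfl⟩
  obtain ⟨f, rfl⟩ := (functor P).map_surjective f
  obtain ⟨Z, hZ, z, _⟩ := exists_isSplitEpi_biprod_desc (P := P) f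
  obtain ⟨K, i, w, ⟨splitting⟩⟩ := exists_splitting_of_isSplitEpi (biprod.desc f z)
  have : HasZeroObject (IdealQuotient P) := (functor P).hasZeroObject_of_additive
  have : HasKernel ((functor P).map (biprod.desc f z)) :=
    ⟨⟨_, (splitting.map (functor P)).fIsKernel⟩⟩
  have := isIso_functor_map_biprod_inl X hZ
  rw [← biprod.inl_desc f z, Functor.map_comp]
  infer_instance

section Coproducts

variable {J : Type*} [HasCoproductsOfShape J C] [P.IsClosedUnderColimitsOfShape (Discrete J)]

lemma functor_map_eq_zero_of_sigma {X : J → C} {Y : C} {f : ∐ X ⟶ Y}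
    (h : ∀ j, (functor P).map (Sigma.ι X j ≫ f) = 0) : (functor P).map f = 0 := by
  simp only [functor_map_eq_zero_iff] at h ⊢
  choose Z hZ a b hab using h
  have : P (∐ Z) := P.prop_colimit _ fun j => hZ j.as
  exact ⟨∐ Z, this, Limits.Sigma.map a, Sigma.desc b, Sigma.hom_ext _ _ fun j => by simp [hab]⟩

variable (P) in
lemma hasCoproduct_functor_obj (X : J → C) : HasCoproduct fun j => (functor P).obj (X j) := by
  have lift {Y : IdealQuotient P} (f : ∀ j, (functor P).obj (X j) ⟶ Y) :
      ∃ g : ∐ X ⟶ Y.as, ∀ j, (functor P).map (Sigma.ι X j ≫ g) = f j := by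
    choose g hg using fun j => (functor P).map_surjective (Y := Y.as) (f j)
    exact ⟨Sigma.desc g, fun j => by rw [Sigma.ι_desc, hg]⟩
  have ext {Y : IdealQuotient P} {f g : (functor P).obj (∐ X) ⟶ Y}
      (h : ∀ j, (functor P).map (Sigma.ι X j) ≫ f = (functor P).map (Sigma.ι X j) ≫ g) :
      f = g := by
    obtain ⟨d, hd⟩ := (functor P).map_surjective (Y := Y.as) (f - g)
    rw [← sub_eq_zero, ← hd]
    refine functor_map_eq_zero_of_sigma fun j => ?_
    rw [Functor.map_comp, hd, Preadditive.comp_sub, h, sub_self]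
  choose desc fac using fun Y => lift (Y := Y)
  exact ⟨⟨_, Cofan.IsColimit.mk
    (Cofan.mk ((functor P).obj (∐ X)) fun j => (functor P).map (Sigma.ι X j))
    (fun t => (functor P).map (desc _ t.inj))
    (fun t j => ((functor P).map_comp _ _).symm.trans (fac _ _ j))
    (fun t m hm => ext fun j => (hm j).trans
      (((functor P).map_comp _ _).symm.trans (fac _ _ j)).symm)⟩⟩

variable (P J) in
theorem hasCoproductsOfShape : HasCoproductsOfShape J (IdealQuotient P) where
  has_colimit F :=
    have : HasColimit (Discrete.functor (F.obj ∘ Discrete.mk)) :=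
      hasCoproduct_functor_obj P fun j => (F.obj ⟨j⟩).as
    hasColimit_of_iso Discrete.natIsoFunctor

end Coproducts

end IdealQuotient

instance isProjective_isClosedUnderColimitsOfShape_discrete {C : Type*} [Category* C] (J : Type*) :
    (isProjective C).IsClosedUnderColimitsOfShape (Discrete J) where
  colimitsOfShape_le := by
    rintro X ⟨p⟩
    refine ⟨fun f e _ => ?_⟩
    have := p.prop_diag_obj
    let c : Cocone p.diag :=
      { pt := _, ι := Discrete.natTrans fun j => Projective.factorThru (p.ι.app j ≫ f) e }
    exact ⟨p.isColimit.desc c, p.isColimit.hom_ext fun j => by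
      rw [p.isColimit.fac_assoc]
      exact Projective.factorThru_comp _ _⟩

instance isProjective_nonempty {C : Type*} [Category* C] [HasZeroObject C] :
    (isProjective C).Nonempty :=
  ObjectProperty.nonempty_of_prop (isZero_zero C).projective

theorem stableModuleCat_isIdempotentComplete_general {C : Type*} [Category* C] [Preadditive C]
    [HasZeroObject C] [HasBinaryBiproducts C] [HasCoproductsOfShape ℕ C] [IsIdempotentComplete C]
    (P : ObjectProperty C) [P.Nonempty] [P.IsClosedUnderColimitsOfShape (Discrete WalkingPair)]
    [P.IsClosedUnderColimitsOfShape (Discrete ℕ)] :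
    IsIdempotentComplete (IdealQuotient P) :=
  have := IdealQuotient.hasCoproductsOfShape P ℕ
  isIdempotentComplete_of_hasKernel_of_isSplitEpi IdealQuotient.hasKernel_of_isSplitEpi

/-- For any ring `R`, the stable category of the category of all left
`R`-modules is idempotent-split: every idempotent endomorphism in it splits. -/
theorem stableModuleCat_isIdempotentComplete (R : Type u) [Ring R] :
    IsIdempotentComplete (StableModuleCat R) :=
  stableModuleCat_isIdempotentComplete_general (isProjective (ModuleCat.{u} R))
end

section
/- Let R = R₀ ⊕ R₁ be a super ring in which 2 (i.e. 1+1) is invertible. Let (M, α) be a C₂-equivariant object in R-SMod with respect to the strict C₂-action ((1̄), Id), i.e. M = M₀ ⊕ M₁ is a super R-module and α : M ≅ M(1̄) is an isomorphism of super R-modules with α(1̄) ∘ α = Id_M. Let N denote the ordinary R-module Φ(M, α), namely the abelian group M₀ with R-action a * x = ax for a ∈ R₀ and a * x = α(ax) for a ∈ R₁. Then the map φ : N ⊕ ^gN → M (with M regarded as an ordinary R-module by forgetting the grading, and ^gN the twist of N along the parity automorphism g), defined by φ(x) = x + α(x) on the first summand and φ(^g x) = x − α(x) on the second summand, is an isomorphism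 of ordinary R-modules. -/
/-!
Since `φ(x, y) = (x + y) + α(x - y)`, the map `φ` is the composite of
`(x, y) ↦ (x + y, x - y)` on `M₀ × M₀`, which is bijective because `2` acts bijectively, with
`id × α : M₀ × M₀ → M₀ × M₁` and the isomorphism `M₀ × M₁ ≅ M`.

For `R`-linearity, `α² = 1` makes `x ↦ x + α(x)` intertwine the action `*` on `M₀` with the given
action on `M`. Twisting `*` by the parity automorphism amounts to replacing `α` by `-α`, again an
involution, so the second summand reduces to the first.
-/

open DirectSum

universe u v

variable (R : Type u) [Ring R] (𝒜 : ZMod 2 → AddSubgroup R)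

/-- A super (`ℤ₂`-graded) module over a super ring `R` with grading `𝒜`: a module `M`
together with a grading `M = M₀ ⊕ M₁` such that `𝒜 i • grading j ⊆ grading (i + j)`. -/
structure SMod : Type (max u (v + 1)) where
  carrier : Type v
  [isAddCommGroup : AddCommGroup carrier]
  [isModule : Module R carrier]
  grading : ZMod 2 → AddSubgroup carrier
  smul_mem : ∀ (i j : ZMod 2) (a : R) (m : carrier),
    a ∈ 𝒜 i → m ∈ grading j → a • m ∈ grading (i + j)
  cover : ∀ m : carrier, ∃ m₀ ∈ grading 0, ∃ m₁ ∈ grading 1, m = m₀ + m₁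
  indep : ∀ m₀ ∈ grading 0, ∀ m₁ ∈ grading 1, m₀ + m₁ = 0 → m₀ = 0 ∧ m₁ = 0

attribute [instance] SMod.isAddCommGroup SMod.isModule

variable [GradedRing 𝒜]

/-- The even part `a₀` of a ring element `a = a₀ + a₁` of the super ring `R`. -/
noncomputable def evenPart (a : R) : R := ↑(DirectSum.decompose 𝒜 a 0)

/-- The odd part `a₁` of a ring element `a = a₀ + a₁` of the super ring `R`. -/
noncomputable def oddPart (a : R) : R := ↑(DirectSum.decompose 𝒜 a 1)

/-- The parity automorphism `g` of the super ring `R`, `g(a) = (-1)^i a` for `a ∈ R_i`,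
i.e. `g(a₀ + a₁) = a₀ - a₁`. -/
noncomputable def parityFun (a : R) : R := evenPart R 𝒜 a - oddPart R 𝒜 a

variable {R 𝒜}

/-- The action `*` of `R` on the even part `M₀ = Φ(M, α)` of a super module equipped with
a degree-shifting linear map `α`: homogeneous even `a` act by `a • x`, homogeneous odd `a`
act by `α (a • x)`. -/
noncomputable def starSMul (M : SMod.{u, v} R 𝒜) (f : M.carrier →ₗ[R] M.carrier)
    (hf : ∀ (i : ZMod 2) (m : M.carrier), m ∈ M.grading i → f m ∈ M.grading (i + 1)) :
    R → ↥(M.grading 0) → ↥(M.grading 0) := fun a x =>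
  ⟨evenPart R 𝒜 a • (x : M.carrier) + f (oddPart R 𝒜 a • (x : M.carrier)), by
    apply AddSubgroup.add_mem
    · have h := M.smul_mem 0 0 (evenPart R 𝒜 a) x (SetLike.coe_mem _) x.2
      rwa [show (0 : ZMod 2) + 0 = 0 from rfl] at h
    · have h1 : oddPart R 𝒜 a • (x : M.carrier) ∈ M.grading 1 := by
        have h := M.smul_mem 1 0 (oddPart R 𝒜 a) x (SetLike.coe_mem _) x.2
        rwa [show (1 : ZMod 2) + 0 = 1 from rfl] at h
      have h2 := hf 1 _ h1
      rwa [show (1 : ZMod 2) + 1 = 0 from rfl] at h2⟩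

/-- The map `φ : N ⊕ ^gN → M`, `φ(x) = x + α(x)` on the first summand and
`φ(^g y) = y - α(y)` on the second summand, for `x, y ∈ N = M₀`. -/
noncomputable def phiMap (M : SMod.{u, v} R 𝒜) (α : M.carrier →ₗ[R] M.carrier)
    (p : ↥(M.grading 0) × ↥(M.grading 0)) : M.carrier :=
  ((p.1 : M.carrier) + α (p.1 : M.carrier)) + ((p.2 : M.carrier) - α (p.2 : M.carrier))

theorem bijective_add_sub {A : Type*} [AddCommGroup A]
    (h2 : Function.Bijective fun x : A ↦ 2 • x) :
    Function.Bijective fun p : A × A ↦ (p.1 + p.2, p.1 - p.2) := by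
  constructor
  · rintro ⟨x, y⟩ ⟨x', y'⟩ h
    obtain ⟨hadd, hsub⟩ : x + y = x' + y' ∧ x - y = x' - y' := Prod.mk.inj h
    have hx : x = x' := h2.injective <| calc
      2 • x = (x + y) + (x - y) := by abel
      _ = (x' + y') + (x' - y') := by rw [hadd, hsub]
      _ = 2 • x' := by abel
    subst hx
    rw [add_left_cancel hadd]
  · rintro ⟨s, d⟩
    obtain ⟨x, hx : 2 • x = s + d⟩ := h2.surjective (s + d)
    refine ⟨(x, s - x), Prod.ext (add_sub_cancel x s) ?_⟩
    calc
      x - (s - x) = 2 • x - s := by abel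
      _ = d := by rw [hx, add_sub_cancel_left]

namespace SMod

section Grading

omit [GradedRing 𝒜]

variable (M : SMod.{u, v} R 𝒜)

/-- The decomposition `M₀ × M₁ ≅ M` of a super module, `(m₀, m₁) ↦ m₀ + m₁`. -/
noncomputable def evenProdOddEquiv : M.grading 0 × M.grading 1 ≃+ M.carrier :=
  AddEquiv.ofBijective ((M.grading 0).subtype.coprod (M.grading 1).subtype) <| by
    constructor
    · refine (injective_iff_map_eq_zero _).mpr ?_
      rintro ⟨m₀, m₁⟩ h
      obtain ⟨h₀, h₁⟩ := M.indep m₀ m₀.2 m₁ m₁.2 h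
      exact Prod.ext (Subtype.ext h₀) (Subtype.ext h₁)
    · intro m
      obtain ⟨m₀, hm₀, m₁, hm₁, rfl⟩ := M.cover m
      exact ⟨(⟨m₀, hm₀⟩, ⟨m₁, hm₁⟩), rfl⟩

theorem bijective_nsmul_even {n : ℕ} (hn : Function.Bijective fun m : M.carrier ↦ n • m) :
    Function.Bijective fun x : M.grading 0 ↦ n • x := by
  have hprod : Function.Bijective (Prod.map (fun x : M.grading 0 ↦ n • x)
      (fun y : M.grading 1 ↦ n • y)) := by
    rw [← M.evenProdOddEquiv.toEquiv.comp_bijective]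
    convert hn.comp M.evenProdOddEquiv.bijective using 1
    exact funext fun p ↦ map_nsmul M.evenProdOddEquiv n p
  exact (Prod.map_bijective.mp hprod).1

variable {M}

/-- The bijection `M₀ ≅ M₁` induced by an involution of `M` that exchanges the two parities. -/
def evenEquivOdd {f : M.carrier → M.carrier}
    (hf : ∀ (i : ZMod 2) (m : M.carrier), m ∈ M.grading i → f m ∈ M.grading (i + 1))
    (hinv : Function.Involutive f) : M.grading 0 ≃ M.grading 1 where
  toFun x := ⟨f x, hf 0 x x.2⟩
  invFun y := ⟨f y, hf 1 y y.2⟩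
  left_inv x := Subtype.ext (hinv x)
  right_inv y := Subtype.ext (hinv y)

end Grading

end SMod

section PhiMap

omit [GradedRing 𝒜]

variable {M : SMod.{u, v} R 𝒜} {α : M.carrier →ₗ[R] M.carrier}

theorem phiMap_add (p q : M.grading 0 × M.grading 0) :
    phiMap M α (p + q) = phiMap M α p + phiMap M α q := by
  simp only [phiMap, Prod.fst_add, Prod.snd_add, AddSubgroup.coe_add, map_add]
  abel

theorem bijective_phiMap
    (hα : ∀ (i : ZMod 2) (m : M.carrier), m ∈ M.grading i → α m ∈ M.grading (i + 1))
    (hinv : Function.Involutive α) (h2 : Function.Bijective fun m : M.carrier ↦ 2 • m) :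
    Function.Bijective (phiMap M α) := by
  have hfactor : phiMap M α = M.evenProdOddEquiv ∘ Prod.map id (SMod.evenEquivOdd hα hinv) ∘
      fun p ↦ (p.1 + p.2, p.1 - p.2) := by
    funext ⟨x, y⟩
    change (x + α x + (y - α y) : M.carrier) = (x + y) + α (x - y)
    rw [map_sub]
    abel
  rw [hfactor]
  exact M.evenProdOddEquiv.bijective.comp <|
    (Function.bijective_id.prodMap (SMod.evenEquivOdd hα hinv).bijective).comp <|
      bijective_add_sub (M.bijective_nsmul_even h2)

end PhiMap

theorem evenPart_add_oddPart (a : R) : evenPart R 𝒜 a + oddPart R 𝒜 a = a := by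
  have hsum := congrArg (DirectSum.coeAddMonoidHom 𝒜)
    (DirectSum.sum_univ_of (DirectSum.decompose 𝒜 a))
  simp only [map_sum, DirectSum.coeAddMonoidHom_of] at hsum
  exact (Fin.sum_univ_two fun i : ZMod 2 ↦ (DirectSum.decompose 𝒜 a i : R)).symm.trans
    (hsum.trans (DirectSum.Decomposition.left_inv a))

theorem evenPart_parityFun (a : R) : evenPart R 𝒜 (parityFun R 𝒜 a) = evenPart R 𝒜 a := by
  simp [evenPart, oddPart, parityFun, DirectSum.of_eq_of_ne]

theorem oddPart_parityFun (a : R) : oddPart R 𝒜 (parityFun R 𝒜 a) = -oddPart R 𝒜 a := by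
  simp [evenPart, oddPart, parityFun, DirectSum.of_eq_of_ne]

section StarSMul

variable {M : SMod.{u, v} R 𝒜} {α : M.carrier →ₗ[R] M.carrier}
  (hα : ∀ (i : ZMod 2) (m : M.carrier), m ∈ M.grading i → α m ∈ M.grading (i + 1))

theorem coe_starSMul (a : R) (x : M.grading 0) :
    (starSMul M α hα a x : M.carrier) =
      evenPart R 𝒜 a • (x : M.carrier) + oddPart R 𝒜 a • α x := by
  simp only [starSMul, map_smul]

theorem starSMul_parityFun (a : R) (x : M.grading 0) :
    starSMul M α hα (parityFun R 𝒜 a) x =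
      starSMul M (-α) (fun i m hm ↦ neg_mem (hα i m hm)) a x :=
  Subtype.ext <| by
    simp only [coe_starSMul, evenPart_parityFun, oddPart_parityFun, neg_smul, LinearMap.neg_apply,
      smul_neg]

theorem starSMul_add_map (hinv : Function.Involutive α) (a : R) (x : M.grading 0) :
    (starSMul M α hα a x : M.carrier) + α (starSMul M α hα a x) = a • ((x : M.carrier) + α x) := by
  set a₀ := evenPart R 𝒜 a with ha₀
  set a₁ := oddPart R 𝒜 a with ha₁
  calc
    (starSMul M α hα a x : M.carrier) + α (starSMul M α hα a x)
    _ = (a₀ • (x : M.carrier) + a₁ • α x) + (a₀ • α x + a₁ • (x : M.carrier)) := by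
      simp only [coe_starSMul, map_add, map_smul, hinv (x : M.carrier), ha₀, ha₁]
    _ = (a₀ + a₁) • ((x : M.carrier) + α x) := by
      simp only [add_smul, smul_add]
      abel
    _ = a • ((x : M.carrier) + α x) := by rw [evenPart_add_oddPart]

theorem starSMul_parityFun_sub_map (hinv : Function.Involutive α) (a : R) (y : M.grading 0) :
    (starSMul M α hα (parityFun R 𝒜 a) y : M.carrier) -
      α (starSMul M α hα (parityFun R 𝒜 a) y) = a • ((y : M.carrier) - α y) := by
  have hneg : Function.Involutive (-α) := fun m ↦ by simp [hinv m]
  simpa only [starSMul_parityFun, LinearMap.neg_apply, ← sub_eq_add_neg] using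
    starSMul_add_map (fun i m hm ↦ neg_mem (hα i m hm)) hneg a y

theorem phiMap_starSMul (hinv : Function.Involutive α) (a : R) (p : M.grading 0 × M.grading 0) :
    phiMap M α (starSMul M α hα a p.1, starSMul M α hα (parityFun R 𝒜 a) p.2) =
      a • phiMap M α p := by
  simp only [phiMap, starSMul_add_map hα hinv, starSMul_parityFun_sub_map hα hinv, smul_add]

end StarSMul

theorem phiMap_isomorphism_general (M : SMod.{u, v} R 𝒜)
    (h2 : Function.Bijective fun m : M.carrier ↦ 2 • m) (α : M.carrier →ₗ[R] M.carrier)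
    (hα : ∀ (i : ZMod 2) (m : M.carrier), m ∈ M.grading i → α m ∈ M.grading (i + 1))
    (hinvol : ∀ m : M.carrier, α (α m) = m) :
    Function.Bijective (phiMap M α) ∧
    (∀ p q : ↥(M.grading 0) × ↥(M.grading 0),
        phiMap M α (p + q) = phiMap M α p + phiMap M α q) ∧
    (∀ (a : R) (p : ↥(M.grading 0) × ↥(M.grading 0)),
        phiMap M α (starSMul M α hα a p.1, starSMul M α hα (parityFun R 𝒜 a) p.2) =
          a • phiMap M α p) :=
  ⟨bijective_phiMap hα hinvol h2, phiMap_add, phiMap_starSMul hα hinvol⟩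

/-- **Statement 11.** Let `R` be a super ring in which `2` is invertible, and `(M, α)` a
`C₂`-equivariant super `R`-module with respect to the degree-shift action: `α : M ≅ M(1̄)`
is an isomorphism of super modules (an `R`-linear bijection shifting the grading by `1̄`)
with `α(1̄) ∘ α = Id`.  Let `N = Φ(M, α)` be the even part `M₀` with the `R`-action `*`
(`a * x = a • x` for even `a`, `a * x = α (a • x)` for odd `a`).  Then the map
`φ : N ⊕ ^gN → M`, `φ(x) = x + α(x)`, `φ(^g y) = y - α(y)`, is an isomorphism of ordinary
`R`-modules, where `N ⊕ ^gN` carries the action `a • (x, y) = (a * x, g(a) * y)`. -/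
theorem phiMap_isomorphism
    (h2 : IsUnit (2 : R)) (M : SMod.{u, v} R 𝒜)
    (α : M.carrier →ₗ[R] M.carrier) (hbij : Function.Bijective α)
    (hα : ∀ (i : ZMod 2) (m : M.carrier), m ∈ M.grading i → α m ∈ M.grading (i + 1))
    (hinvol : ∀ m : M.carrier, α (α m) = m) :
    Function.Bijective (phiMap M α) ∧
    (∀ p q : ↥(M.grading 0) × ↥(M.grading 0),
        phiMap M α (p + q) = phiMap M α p + phiMap M α q) ∧
    (∀ (a : R) (p : ↥(M.grading 0) × ↥(M.grading 0)),
        phiMap M α (starSMul M α hα a p.1, starSMul M α hα (parityFun R 𝒜 a) p.2) =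
          a • phiMap M α p) := by
  have h2M : Function.Bijective fun m : M.carrier ↦ 2 • m := by
    simpa only [ofNat_smul_eq_nsmul] using h2.smul_bijective (α := R) (β := M.carrier)
  exact phiMap_isomorphism_general M h2M α hα hinvol
end
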